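/- Let m ≥ 2 be an integer. For τ ∈ ℍ and u, v ∈ ℂ with u−v ∉ Λ_τ, define ψ(u,v;τ) = 2πi·∂_τ℘_m(u−v;τ) + m·G₂(τ)·℘_m(u−v;τ) − m·G₂(τ)·(u−v)·℘_{m+1}(u−v;τ) − m·℘_{m+1}(u−v;τ)·℘₁(v−u;τ), where ∂_τ℘_m(z;τ) denotes the complex derivative of the function τ ↦ ℘_m(z;τ) at fixed z. Then for every g = (A B; C D) ∈ SL₂(ℤ): ψ( u/(Cτ+D), v/(Cτ+D); (Aτ+B)/(Cτ+D) ) = (Cτ+D)^{m+2}·ψ(u,v;τ). (This is the modular transformation of weight m+2 of the function ϑ_j(℘_m(z_j−z_s;·)) in the case j = r.) -/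

import Mathlib

open Complex Real

/-- The lattice point `kτ + l` associated to `p = (k, l) ∈ ℤ²`. -/
noncomputable def latticePt (τ : ℂ) (p : ℤ × ℤ) : ℂ := (p.1 : ℂ) * τ + (p.2 : ℂ)

/-- The Weierstrass function `℘₁(z;τ)`. -/
noncomputable def wp1 (z τ : ℂ) : ℂ :=
  1 / z + ∑' p : {p : ℤ × ℤ // p ≠ (0, 0)},
    (1 / (z - latticePt τ p.1) + 1 / latticePt τ p.1 + z / (latticePt τ p.1) ^ 2)

/-- The Weierstrass function `℘₂(z;τ)`. -/
noncomputable def wp2 (z τ : ℂ) : ℂ :=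
  1 / z ^ 2 + ∑' p : {p : ℤ × ℤ // p ≠ (0, 0)},
    (1 / (z - latticePt τ p.1) ^ 2 - 1 / (latticePt τ p.1) ^ 2)

/-- The Weierstrass function `℘_m(z;τ)` for `m ≥ 3`. -/
noncomputable def wpHigh (m : ℕ) (z τ : ℂ) : ℂ :=
  ∑' p : ℤ × ℤ, 1 / (z - latticePt τ p) ^ m

/-- The Weierstrass function `℘_m(z;τ)`, `m ≥ 1`. -/
noncomputable def wp (m : ℕ) (z τ : ℂ) : ℂ :=
  if m = 1 then wp1 z τ else if m = 2 then wp2 z τ else wpHigh m z τ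

/-- The Eisenstein series `G_k(τ) = Σ_{(m,l) ≠ (0,0)} (mτ+l)^{-k}` (used for `k ≥ 3`). -/
noncomputable def Eis (k : ℕ) (τ : ℂ) : ℂ :=
  ∑' p : {p : ℤ × ℤ // p ≠ (0, 0)}, 1 / (latticePt τ p.1) ^ k

/-- The quasimodular Eisenstein series
`G₂(τ) = π²/3 + Σ_{m≠0} Σ_{l∈ℤ} (mτ+l)^{-2}` (iterated sum). -/
noncomputable def G2 (τ : ℂ) : ℂ :=
  (Real.pi : ℂ) ^ 2 / 3 +
    ∑' m : {m : ℤ // m ≠ 0}, ∑' l : ℤ, 1 / (((m : ℤ) : ℂ) * τ + (l : ℂ)) ^ 2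

/-- The function `ψ(u,v;τ) = 2πi·∂_τ℘_m(u−v;τ) + m·G₂(τ)·℘_m(u−v;τ)
− m·G₂(τ)·(u−v)·℘_{m+1}(u−v;τ) − m·℘_{m+1}(u−v;τ)·℘₁(v−u;τ)`. -/
noncomputable def psiTheta (m : ℕ) (u v τ : ℂ) : ℂ :=
  2 * Real.pi * Complex.I * deriv (fun s => wp m (u - v) s) τ +
    (m : ℂ) * G2 τ * wp m (u - v) τ -
    (m : ℂ) * G2 τ * (u - v) * wp (m + 1) (u - v) τ -
    (m : ℂ) * wp (m + 1) (u - v) τ * wp1 (v - u) τ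

/-!
For `g ∈ SL₂(ℤ)` with bottom row `(C, D)` and `j = Cτ + D`, the row action of `g` on `ℤ²` identifies
the lattice of `gτ` with `j⁻¹ Λ_τ`, so `℘_m(z / j; gτ) = j ^ m ℘_m(z; τ)` by homogeneity of the
terms. Differentiating this identity in `τ` at fixed `z` hits both arguments of the left-hand side
and the factor `j ^ m`, which gives
`∂_τ℘_m(z / j; gτ) = j ^ (m + 2) ∂_τ℘_m(z; τ) + m C j ^ (m + 1) (℘_m(z; τ) - z ℘_{m+1}(z; τ))`.
The extra term is cancelled in `ψ` by the anomaly `G₂(gτ) = j ^ 2 G₂(τ) - 2πi C j`.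
-/

open Filter Topology UpperHalfPlane
open scoped MatrixGroups

section Series

theorem tsum_eq_add_tsum_subtype_ne {ι α : Type*} [AddCommGroup α] [TopologicalSpace α]
    [IsTopologicalAddGroup α] [T2Space α] {f : ι → α} (hf : Summable f) (i : ι) :
    ∑' j, f j = f i + ∑' j : {j // j ≠ i}, f j := by
  classical
  rw [hf.tsum_eq_add_tsum_ite i]
  congr 1
  change _ = ∑' j : ({i}ᶜ : Set ι), f j
  rw [tsum_subtype]
  exact tsum_congr fun j => by by_cases h : j = i <;> simp [h]

/-- The Schwarz lemma bounds the derivatives of the terms by a multiple of the bounds on the terms,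
so that the series can be differentiated termwise. -/
theorem differentiableAt_tsum_of_summable_norm {ι E F : Type*} [NormedAddCommGroup E]
    [NormedSpace ℂ E] [NormedAddCommGroup F] [NormedSpace ℂ F] [CompleteSpace F]
    {f : ι → E → F} {u : ι → ℝ} {x : E} (hu : Summable u)
    (hf : ∀ᶠ y in 𝓝 x, ∀ i, DifferentiableAt ℂ (f i) y ∧ ‖f i y‖ ≤ u i) :
    DifferentiableAt ℂ (fun y => ∑' i, f i y) x := by
  obtain ⟨ε, hε, hball⟩ := Metric.eventually_nhds_iff_ball.mp hf
  have hsub : ∀ y ∈ Metric.ball x (ε / 2), Metric.ball y (ε / 2) ⊆ Metric.ball x ε :=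
    fun y hy => Metric.ball_subset (by linarith [Metric.mem_ball.mp hy])
  have hfderiv : ∀ i, ∀ y ∈ Metric.ball x (ε / 2), ‖fderiv ℂ (f i) y‖ ≤ 2 * u i / (ε / 2) := by
    intro i y hy
    refine Complex.norm_fderiv_le_div_of_mapsTo_ball
      (fun w hw => (hball w (hsub y hy hw) i).1.differentiableWithinAt) (fun w hw => ?_)
      (half_pos hε)
    rw [mem_closedBall_iff_norm]
    linarith [norm_sub_le (f i w) (f i y), (hball w (hsub y hy hw) i).2,
      (hball y (hsub y hy (Metric.mem_ball_self (half_pos hε))) i).2]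
  have hx : x ∈ Metric.ball x (ε / 2) := Metric.mem_ball_self (half_pos hε)
  exact (hasFDerivAt_tsum_of_isPreconnected ((hu.mul_left 2).div_const (ε / 2)) Metric.isOpen_ball
    (convex_ball x (ε / 2)).isPreconnected
    (fun i y hy => (hball y (Metric.ball_subset_ball (half_le_self hε.le) hy) i).1.hasFDerivAt)
    hfderiv hx
    (hu.of_norm_bounded fun i => (hball x (Metric.mem_ball_self hε) i).2) hx).differentiableAt

end Series

section Lattice

theorem norm_int_prod_eq_norm_vec (p : ℤ × ℤ) : ‖p‖ = ‖![p.1, p.2]‖ := by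
  rw [EisensteinSeries.norm_eq_max_natAbs, Prod.norm_def]
  simp [Int.norm_eq_abs]

theorem summable_inv_one_add_norm_int_prod_pow_three :
    Summable fun p : ℤ × ℤ => ((1 + ‖p‖) ^ 3)⁻¹ := by
  have h := (finTwoArrowEquiv ℤ).symm.summable_iff.mpr
    (EisensteinSeries.summable_one_div_norm_rpow (k := 3) (by norm_num))
  refine h.of_norm_bounded_eventually ?_
  filter_upwards [eventually_cofinite_ne 0] with p hp
  have hp' : 0 < ‖p‖ := norm_pos_iff.mpr hp
  rw [Function.comp_apply, finTwoArrowEquiv_symm_apply, ← norm_int_prod_eq_norm_vec,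
    Real.rpow_neg hp'.le, Real.norm_of_nonneg (by positivity)]
  norm_cast
  gcongr
  linarith

theorem exists_mul_norm_le_norm_latticePt {τ : ℂ} (hτ : 0 < τ.im) :
    ∃ r > 0, ∀ p, r * ‖p‖ ≤ ‖latticePt τ p‖ := by
  refine ⟨EisensteinSeries.r ⟨τ, hτ⟩, EisensteinSeries.r_pos _, fun p => ?_⟩
  rcases eq_or_ne p 0 with rfl | hp
  · simp
  · rw [norm_int_prod_eq_norm_vec]
    refine EisensteinSeries.r_mul_max_le ⟨τ, hτ⟩ (x := ![p.1, p.2]) fun h => hp ?_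
    exact Prod.ext (congrFun h 0) (congrFun h 1)

theorem latticePt_zero (τ : ℂ) : latticePt τ 0 = 0 := by simp [latticePt]

theorem latticePt_neg (τ : ℂ) (p : ℤ × ℤ) : latticePt τ (-p) = -latticePt τ p := by
  simp only [latticePt, Prod.fst_neg, Prod.snd_neg]
  push_cast
  ring

theorem latticePt_ne_zero {τ : ℂ} (hτ : 0 < τ.im) {p : ℤ × ℤ} (hp : p ≠ 0) :
    latticePt τ p ≠ 0 := by
  obtain ⟨r, hr, h⟩ := exists_mul_norm_le_norm_latticePt hτ
  exact norm_pos_iff.mp ((mul_pos hr (norm_pos_iff.mpr hp)).trans_le (h p))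

theorem norm_latticePt_sub_latticePt_le (s t : ℂ) (p : ℤ × ℤ) :
    ‖latticePt s p - latticePt t p‖ ≤ ‖s - t‖ * ‖p‖ := by
  have h : latticePt s p - latticePt t p = (s - t) * p.1 := by simp only [latticePt]; ring
  rw [h, norm_mul, Complex.norm_intCast, ← Int.norm_eq_abs]
  gcongr
  exact norm_fst_le p

theorem exists_mul_one_add_norm_le_norm_sub_latticePt {z τ : ℂ} (hτ : 0 < τ.im) {S : Set (ℤ × ℤ)}
    (hz : ∀ p ∈ S, z ≠ latticePt τ p) :
    ∃ δ > 0, ∀ p ∈ S, δ * (1 + ‖p‖) ≤ ‖z - latticePt τ p‖ := by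
  obtain ⟨r, hr, hlow⟩ := exists_mul_norm_le_norm_latticePt hτ
  have hlim : Tendsto (fun p : S => ‖(p : ℤ × ℤ)‖) cofinite atTop :=
    (tendsto_norm_comp_cofinite_atTop_of_isClosedEmbedding IsClosedEmbedding.id).comp
      Subtype.val_injective.tendsto_cofinite
  have hbig : (fun p : S => 1 + ‖(p : ℤ × ℤ)‖) =O[cofinite] fun p => z - latticePt τ p := by
    refine Asymptotics.IsBigO.of_bound (2 / r) ?_
    filter_upwards [hlim.eventually_ge_atTop ((2 * ‖z‖ + r) / r)] with p hp
    rw [div_le_iff₀' hr] at hp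
    rw [Real.norm_of_nonneg (by positivity), div_mul_eq_mul_div, le_div_iff₀' hr]
    have := norm_sub_norm_le (latticePt τ p) z
    rw [norm_sub_rev] at this
    linarith [hlow p]
  obtain ⟨C, hC⟩ := (Asymptotics.isBigO_cofinite_iff fun (p : S) h =>
    absurd h (sub_ne_zero.mpr (hz p p.2))).mp hbig
  refine ⟨(max C 1)⁻¹, by positivity, fun p hp => ?_⟩
  rw [inv_mul_le_iff₀ (by positivity)]
  refine (Real.le_norm_self _).trans ((hC ⟨p, hp⟩).trans ?_)
  gcongr
  exact le_max_left C 1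

theorem exists_eventually_mul_one_add_norm_le_norm_sub_latticePt {z τ : ℂ} (hτ : 0 < τ.im)
    {S : Set (ℤ × ℤ)} (hz : ∀ p ∈ S, z ≠ latticePt τ p) :
    ∃ δ > 0, ∀ᶠ x : ℂ × ℂ in 𝓝 (z, τ), ∀ p ∈ S, δ * (1 + ‖p‖) ≤ ‖x.1 - latticePt x.2 p‖ := by
  obtain ⟨δ, hδ, h⟩ := exists_mul_one_add_norm_le_norm_sub_latticePt hτ hz
  refine ⟨δ / 2, half_pos hδ, Metric.eventually_nhds_iff.mpr ⟨δ / 2, half_pos hδ, ?_⟩⟩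
  intro x hx p hp
  rw [dist_eq_norm] at hx
  have hz' : ‖z - x.1‖ ≤ δ / 2 := norm_sub_rev z x.1 ▸ (norm_fst_le (x - (z, τ))).trans hx.le
  have hp' : ‖latticePt x.2 p - latticePt τ p‖ ≤ δ / 2 * ‖p‖ :=
    (norm_latticePt_sub_latticePt_le x.2 τ p).trans
      (by gcongr; exact (norm_snd_le (x - (z, τ))).trans hx.le)
  have hsplit : z - latticePt τ p =
      (x.1 - latticePt x.2 p) + ((z - x.1) + (latticePt x.2 p - latticePt τ p)) := by ring
  have := h p hp
  rw [hsplit] at this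
  linarith [norm_add_le (x.1 - latticePt x.2 p) ((z - x.1) + (latticePt x.2 p - latticePt τ p)),
    norm_add_le (z - x.1) (latticePt x.2 p - latticePt τ p)]

end Lattice

section Terms

/-- The summand of `℘_m(z; τ)` at the lattice point `ω`, including the Weierstrass correction for
`m = 1, 2`. Since `1 / 0 = 0`, it is the exceptional summand `1 / z ^ m` when `ω = 0`. -/
noncomputable def wpTerm (m : ℕ) (z ω : ℂ) : ℂ :=
  1 / (z - ω) ^ m +
    if m = 1 then 1 / ω + z / ω ^ 2 else if m = 2 then -(1 / ω ^ 2) else 0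

theorem wpTerm_zero (m : ℕ) (z : ℂ) : wpTerm m z 0 = 1 / z ^ m := by simp [wpTerm]

theorem wpTerm_div {c : ℂ} (hc : c ≠ 0) (m : ℕ) (z ω : ℂ) :
    wpTerm m (z / c) (ω / c) = c ^ m * wpTerm m z ω := by
  simp only [wpTerm, ← sub_div, div_pow, one_div_div, mul_add, mul_one_div]
  congr 1
  split_ifs with h1 h2
  · subst h1
    field_simp
  · subst h2
    field_simp
  · rw [mul_zero]

theorem wpTerm_one_eq {z ω : ℂ} (hω : ω ≠ 0) (hz : z ≠ ω) :
    wpTerm 1 z ω = z ^ 2 * ω⁻¹ ^ 2 * (z - ω)⁻¹ := by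
  have := sub_ne_zero.mpr hz
  simp only [wpTerm, if_true]
  field_simp
  ring

theorem wpTerm_two_eq {z ω : ℂ} (hω : ω ≠ 0) (hz : z ≠ ω) :
    wpTerm 2 z ω = z * (ω⁻¹ * (z - ω)⁻¹ ^ 2 - ω⁻¹ ^ 2 * (z - ω)⁻¹) := by
  have := sub_ne_zero.mpr hz
  simp only [wpTerm, OfNat.ofNat_ne_one, if_true, if_false]
  field_simp
  ring

theorem norm_wpTerm_le {m : ℕ} (hm : 1 ≤ m) {z ω : ℂ} {δ s : ℝ} (hδ : 0 < δ) (hs : 1 ≤ s)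
    (hω : δ * s ≤ ‖ω‖) (hz : δ * s ≤ ‖z - ω‖) :
    ‖wpTerm m z ω‖ ≤ (δ⁻¹ ^ m + (‖z‖ ^ 2 + 2 * ‖z‖) * δ⁻¹ ^ 3) * (s ^ 3)⁻¹ := by
  have hδs : 0 < δ * s := by positivity
  have hω0 : ω ≠ 0 := norm_pos_iff.mp (hδs.trans_le hω)
  have hz0 : z ≠ ω := sub_ne_zero.mp (norm_pos_iff.mp (hδs.trans_le hz))
  have hω' : ‖ω⁻¹‖ ≤ (δ * s)⁻¹ := norm_inv ω ▸ inv_anti₀ hδs hω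
  have hz' : ‖(z - ω)⁻¹‖ ≤ (δ * s)⁻¹ := norm_inv (z - ω) ▸ inv_anti₀ hδs hz
  rcases (show m = 1 ∨ m = 2 ∨ 3 ≤ m by omega) with rfl | rfl | hm3
  · rw [wpTerm_one_eq hω0 hz0, norm_mul, norm_mul, norm_pow, norm_pow]
    calc ‖z‖ ^ 2 * ‖ω⁻¹‖ ^ 2 * ‖(z - ω)⁻¹‖
        ≤ ‖z‖ ^ 2 * (δ * s)⁻¹ ^ 2 * (δ * s)⁻¹ := by gcongr
      _ = ‖z‖ ^ 2 * δ⁻¹ ^ 3 * (s ^ 3)⁻¹ := by rw [mul_inv]; ring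
      _ ≤ _ := by
        gcongr
        refine le_add_of_nonneg_of_le (by positivity) ?_
        gcongr
        linarith [norm_nonneg z]
  · rw [wpTerm_two_eq hω0 hz0, norm_mul]
    calc ‖z‖ * ‖ω⁻¹ * (z - ω)⁻¹ ^ 2 - ω⁻¹ ^ 2 * (z - ω)⁻¹‖
        ≤ ‖z‖ * (‖ω⁻¹‖ * ‖(z - ω)⁻¹‖ ^ 2 + ‖ω⁻¹‖ ^ 2 * ‖(z - ω)⁻¹‖) := by
          gcongr
          refine (norm_sub_le _ _).trans_eq ?_
          simp only [norm_mul, norm_pow]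
      _ ≤ ‖z‖ * ((δ * s)⁻¹ * (δ * s)⁻¹ ^ 2 + (δ * s)⁻¹ ^ 2 * (δ * s)⁻¹) := by gcongr
      _ = 2 * ‖z‖ * δ⁻¹ ^ 3 * (s ^ 3)⁻¹ := by rw [mul_inv]; ring
      _ ≤ _ := by
        gcongr
        refine le_add_of_nonneg_of_le (by positivity) ?_
        gcongr
        linarith [sq_nonneg ‖z‖]
  · rw [wpTerm, if_neg (by omega), if_neg (by omega), add_zero, one_div, ← inv_pow, norm_pow]
    calc ‖(z - ω)⁻¹‖ ^ m ≤ (δ * s)⁻¹ ^ m := by gcongr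
      _ = δ⁻¹ ^ m * (s ^ m)⁻¹ := by rw [mul_inv, mul_pow, inv_pow s]
      _ ≤ _ := by
        gcongr
        exact le_add_of_nonneg_right (by positivity)

theorem differentiableAt_wpTerm_latticePt (m : ℕ) (p : ℤ × ℤ) {x : ℂ × ℂ} (hτ : 0 < x.2.im)
    (hz : x.1 ≠ latticePt x.2 p) :
    DifferentiableAt ℂ (fun y : ℂ × ℂ => wpTerm m y.1 (latticePt y.2 p)) x := by
  have hlat : DifferentiableAt ℂ (fun y : ℂ × ℂ => latticePt y.2 p) x := by
    unfold latticePt; fun_prop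
  have hz' : (x.1 - latticePt x.2 p) ^ m ≠ 0 := pow_ne_zero m (sub_ne_zero.mpr hz)
  rcases eq_or_ne p 0 with rfl | hp
  · simp only [latticePt_zero, sub_zero, wpTerm_zero] at hz' ⊢
    fun_prop (disch := assumption)
  · have hp' : latticePt x.2 p ≠ 0 := latticePt_ne_zero hτ hp
    have hp2 : latticePt x.2 p ^ 2 ≠ 0 := pow_ne_zero 2 hp'
    unfold wpTerm
    split_ifs <;> fun_prop (disch := assumption)

theorem hasDerivAt_wpTerm (m : ℕ) {z ω : ℂ} (hz : z ≠ ω) :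
    HasDerivAt (fun w => wpTerm m w ω) (-m * wpTerm (m + 1) z ω) z := by
  have hz' := sub_ne_zero.mpr hz
  have hpow := (((hasDerivAt_id z).sub_const ω).fun_pow m).fun_inv (pow_ne_zero m hz')
  have hcorr : HasDerivAt
      (fun w => if m = 1 then 1 / ω + w / ω ^ 2 else if m = 2 then -(1 / ω ^ 2) else 0)
      (if m = 1 then 1 / ω ^ 2 else 0) z := by
    split_ifs
    · exact ((hasDerivAt_id z).div_const (ω ^ 2)).const_add (1 / ω)
    · exact hasDerivAt_const z _
    · exact hasDerivAt_const z 0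
  simp only [wpTerm, one_div] at hcorr ⊢
  refine (hpow.add hcorr).congr_deriv ?_
  rcases m with _ | _ | n
  · simp
  · simp only [zero_add, Nat.cast_one, id_eq, tsub_self, pow_zero, pow_one, if_true,
      Nat.reduceAdd, OfNat.ofNat_ne_one, if_false]
    field_simp
    ring
  · simp only [Nat.cast_add, Nat.cast_one, id_eq, Nat.add_sub_cancel, Nat.add_eq_right,
      Nat.add_eq_zero_iff, one_ne_zero, and_false, if_false, Nat.reduceEqDiff]
    field_simp
    ring

end Terms

section Weierstrass

/-- The set of pairs `(z, τ)` with `τ ∈ ℍ` and `z ∉ Λ_τ`, on which the functions `℘_m` are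
holomorphic. -/
def wpDomain : Set (ℂ × ℂ) := {x | 0 < x.2.im ∧ ∀ p, x.1 ≠ latticePt x.2 p}

theorem isOpen_wpDomain : IsOpen wpDomain := by
  refine isOpen_iff_mem_nhds.mpr fun x hx => ?_
  obtain ⟨δ, hδ, hb⟩ :=
    exists_eventually_mul_one_add_norm_le_norm_sub_latticePt hx.1 (S := .univ) fun p _ => hx.2 p
  have him : ∀ᶠ y : ℂ × ℂ in 𝓝 x, 0 < y.2.im :=
    continuousAt_const.eventually_lt (by fun_prop) hx.1
  filter_upwards [him, hb] with y hy hyb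
  exact ⟨hy, fun p =>
    sub_ne_zero.mp (norm_pos_iff.mp (lt_of_lt_of_le (by positivity) (hyb p trivial)))⟩

variable {m : ℕ} {z τ : ℂ}

theorem neg_mem_wpDomain (h : (z, τ) ∈ wpDomain) : (-z, τ) ∈ wpDomain := by
  refine ⟨h.1, fun p hp => h.2 (-p) ?_⟩
  rw [latticePt_neg]
  exact neg_eq_iff_eq_neg.mp hp

theorem exists_summable_eventually_norm_wpTerm_le (hm : 1 ≤ m) (hzτ : (z, τ) ∈ wpDomain) :
    ∃ u : ℤ × ℤ → ℝ, Summable u ∧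
      ∀ᶠ x : ℂ × ℂ in 𝓝 (z, τ), ∀ p, ‖wpTerm m x.1 (latticePt x.2 p)‖ ≤ u p := by
  obtain ⟨hτ, hz⟩ := hzτ
  obtain ⟨δ, hδ, hxz⟩ :=
    exists_eventually_mul_one_add_norm_le_norm_sub_latticePt hτ (S := .univ) fun p _ => hz p
  obtain ⟨η, hη, hω⟩ :=
    exists_eventually_mul_one_add_norm_le_norm_sub_latticePt hτ (z := 0) (S := {0}ᶜ)
      fun p hp => (latticePt_ne_zero hτ hp).symm
  have hxω : ∀ᶠ x : ℂ × ℂ in 𝓝 (z, τ), ∀ p ≠ 0, η * (1 + ‖p‖) ≤ ‖latticePt x.2 p‖ := by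
    have hcont : Tendsto (fun x : ℂ × ℂ => ((0 : ℂ), x.2)) (𝓝 (z, τ)) (𝓝 (0, τ)) :=
      Continuous.tendsto' (by fun_prop) _ _ rfl
    filter_upwards [hcont.eventually hω] with x hx p hp
    simpa using hx p hp
  have hbdd : ∀ᶠ x : ℂ × ℂ in 𝓝 (z, τ), ‖x.1‖ ≤ ‖z‖ + 1 :=
    (continuous_fst.norm.tendsto (z, τ)).eventually_le_const (lt_add_one ‖z‖)
  set ε := min δ η
  have hε : 0 < ε := lt_min hδ hη
  set M := ‖z‖ + 1
  refine ⟨fun p => (ε⁻¹ ^ m + (M ^ 2 + 2 * M) * ε⁻¹ ^ 3) * ((1 + ‖p‖) ^ 3)⁻¹,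
    summable_inv_one_add_norm_int_prod_pow_three.mul_left _, ?_⟩
  filter_upwards [hxz, hxω, hbdd] with x hxz hxω hxM p
  have hxz' : ε * (1 + ‖p‖) ≤ ‖x.1 - latticePt x.2 p‖ :=
    le_trans (by gcongr; exact min_le_left δ η) (hxz p trivial)
  rcases eq_or_ne p 0 with rfl | hp
  · simp only [latticePt_zero, sub_zero, norm_zero, add_zero, mul_one] at hxz'
    rw [latticePt_zero, wpTerm_zero, norm_div, norm_pow, norm_one, norm_zero, one_div, ← inv_pow]
    simp only [add_zero, one_pow, inv_one, mul_one]
    exact le_add_of_le_of_nonneg (by gcongr) (by positivity)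
  · have hxω' : ε * (1 + ‖p‖) ≤ ‖latticePt x.2 p‖ :=
      le_trans (by gcongr; exact min_le_right δ η) (hxω p hp)
    refine (norm_wpTerm_le hm hε (by simp) hxω' hxz').trans ?_
    gcongr

theorem hasSum_wpTerm (hm : 1 ≤ m) (hzτ : (z, τ) ∈ wpDomain) :
    HasSum (fun p => wpTerm m z (latticePt τ p)) (wp m z τ) := by
  obtain ⟨u, hu, hb⟩ := exists_summable_eventually_norm_wpTerm_le hm hzτ
  have hs : Summable fun p => wpTerm m z (latticePt τ p) := hu.of_norm_bounded hb.self_of_nhds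
  have hsplit := tsum_eq_add_tsum_subtype_ne hs (0, 0)
  rw [show latticePt τ (0, 0) = 0 from latticePt_zero τ, wpTerm_zero] at hsplit
  suffices wp m z τ = ∑' p, wpTerm m z (latticePt τ p) from this ▸ hs.hasSum
  unfold wp
  split_ifs with h1 h2
  · subst h1
    rw [hsplit]
    simp only [wp1, wpTerm, if_true, pow_one, add_assoc]
  · subst h2
    rw [hsplit]
    simp only [wp2, wpTerm, OfNat.ofNat_ne_one, if_true, if_false, sub_eq_add_neg]
  · simp only [wpHigh, wpTerm, h1, h2, if_false, add_zero]

theorem differentiableAt_wp (hm : 1 ≤ m) (hzτ : (z, τ) ∈ wpDomain) :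
    DifferentiableAt ℂ (fun x : ℂ × ℂ => wp m x.1 x.2) (z, τ) := by
  obtain ⟨u, hu, hb⟩ := exists_summable_eventually_norm_wpTerm_le hm hzτ
  have hdom := isOpen_wpDomain.eventually_mem hzτ
  have heq : (fun x : ℂ × ℂ => wp m x.1 x.2) =ᶠ[𝓝 (z, τ)]
      fun x => ∑' p, wpTerm m x.1 (latticePt x.2 p) :=
    hdom.mono fun x hx => (hasSum_wpTerm hm hx).tsum_eq.symm
  refine (differentiableAt_tsum_of_summable_norm hu ?_).congr_of_eventuallyEq heq
  filter_upwards [hdom, hb] with x hx hxb p using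
    ⟨differentiableAt_wpTerm_latticePt m p hx.1 (hx.2 p), hxb p⟩

theorem hasDerivAt_wp (hm : 1 ≤ m) (hzτ : (z, τ) ∈ wpDomain) :
    HasDerivAt (fun w => wp m w τ) (-m * wp (m + 1) z τ) z := by
  have hdiff : DifferentiableAt ℂ (fun w => wp m w τ) z :=
    (differentiableAt_wp hm hzτ).comp z (f := fun w => (w, τ)) (by fun_prop)
  obtain ⟨u, hu, hb⟩ := exists_summable_eventually_norm_wpTerm_le hm hzτ
  have hslice : ∀ᶠ w in 𝓝 z, (w, τ) ∈ wpDomain ∧ ∀ p, ‖wpTerm m w (latticePt τ p)‖ ≤ u p :=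
    ((isOpen_wpDomain.eventually_mem hzτ).and hb).curry_nhds.mono fun w hw => hw.self_of_nhds
  obtain ⟨ε, hε, hball⟩ := Metric.eventually_nhds_iff_ball.mp hslice
  have hterm : ∀ p, ∀ w ∈ Metric.ball z ε,
      HasDerivAt (fun w => wpTerm m w (latticePt τ p)) (-m * wpTerm (m + 1) w (latticePt τ p)) w :=
    fun p w hw => hasDerivAt_wpTerm m ((hball w hw).1.2 p)
  have hsum := Complex.hasSum_deriv_of_summable_norm hu
    (fun p w hw => (hterm p w hw).differentiableAt.differentiableWithinAt) Metric.isOpen_ball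
    (fun p w hw => (hball w hw).2 p) (Metric.mem_ball_self hε)
  have heq : (fun w => wp m w τ) =ᶠ[𝓝 z] fun w => ∑' p, wpTerm m w (latticePt τ p) :=
    hslice.mono fun w hw => (hasSum_wpTerm hm hw.1).tsum_eq.symm
  rw [← heq.deriv_eq] at hsum
  simp only [(hterm _ z (Metric.mem_ball_self hε)).deriv] at hsum
  rw [((hasSum_wpTerm (Nat.le_add_left 1 m) hzτ).mul_left (-m : ℂ)).unique hsum]
  exact hdiff.hasDerivAt

theorem hasDerivAt_wp_comp (hm : 1 ≤ m) {a b : ℂ → ℂ} {a' b' t : ℂ} (ha : HasDerivAt a a' t)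
    (hb : HasDerivAt b b' t) (hab : (a t, b t) ∈ wpDomain) :
    HasDerivAt (fun s => wp m (a s) (b s))
      (a' * (-m * wp (m + 1) (a t) (b t)) + b' * deriv (fun s => wp m (a t) s) (b t)) t := by
  have hwp := (differentiableAt_wp hm hab).hasFDerivAt
  set D := fderiv ℂ (fun x : ℂ × ℂ => wp m x.1 x.2) (a t, b t)
  have hDz : D (1, 0) = -m * wp (m + 1) (a t) (b t) :=
    (hwp.comp_hasDerivAt (a t) (f := fun w => (w, b t))
      ((hasDerivAt_id (a t)).prodMk (hasDerivAt_const (a t) (b t)))).unique (hasDerivAt_wp hm hab)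
  have hDτ : deriv (fun s => wp m (a t) s) (b t) = D (0, 1) :=
    (hwp.comp_hasDerivAt (b t)
      ((hasDerivAt_const (b t) (a t)).prodMk (hasDerivAt_id (b t)))).deriv
  have hD : D (a', b') = a' * D (1, 0) + b' * D (0, 1) := by
    rw [← smul_eq_mul, ← smul_eq_mul, ← map_smul, ← map_smul, ← map_add]
    simp
  rw [← hDz, hDτ, ← hD]
  exact hwp.comp_hasDerivAt t (ha.prodMk hb)

end Weierstrass

section ModularAction

/-- The right action of `SL₂(ℤ)` on row vectors `(k, l)`. -/
def rowActionEquiv (g : SL(2, ℤ)) : ℤ × ℤ ≃ ℤ × ℤ where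
  toFun p := (p.1 * g 0 0 + p.2 * g 1 0, p.1 * g 0 1 + p.2 * g 1 1)
  invFun p := (p.1 * g 1 1 - p.2 * g 1 0, -p.1 * g 0 1 + p.2 * g 0 0)
  left_inv p := by
    have h := g.det_coe
    rw [Matrix.det_fin_two] at h
    ext
    · linear_combination p.1 * h
    · linear_combination p.2 * h
  right_inv p := by
    have h := g.det_coe
    rw [Matrix.det_fin_two] at h
    ext
    · linear_combination p.1 * h
    · linear_combination p.2 * h

variable {m : ℕ} {z : ℂ} (g : SL(2, ℤ)) (τ : ℍ)

theorem coe_smul_eq_div_denom :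
    ((g • τ : ℍ) : ℂ) = ((g 0 0 : ℤ) * (τ : ℂ) + (g 0 1 : ℤ)) / denom g τ := by
  rw [UpperHalfPlane.coe_specialLinearGroup_apply, ModularGroup.denom_apply]
  simp

theorem latticePt_smul (p : ℤ × ℤ) :
    latticePt ↑(g • τ) p = latticePt τ (rowActionEquiv g p) / denom g τ := by
  rw [eq_div_iff (denom_ne_zero g τ), latticePt, add_mul, coe_smul_eq_div_denom, mul_assoc,
    div_mul_cancel₀ _ (denom_ne_zero g τ), ModularGroup.denom_apply]
  simp only [latticePt, rowActionEquiv, Equiv.coe_fn_mk]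
  push_cast
  ring

variable {τ}

theorem div_denom_smul_mem_wpDomain (hz : (z, (τ : ℂ)) ∈ wpDomain) :
    (z / denom g τ, ((g • τ : ℍ) : ℂ)) ∈ wpDomain := by
  refine ⟨(g • τ).im_pos, fun p hp => hz.2 (rowActionEquiv g p) ?_⟩
  rwa [latticePt_smul, div_left_inj' (denom_ne_zero g τ)] at hp

theorem wp_smul (hm : 1 ≤ m) (hz : (z, (τ : ℂ)) ∈ wpDomain) :
    wp m (z / denom g τ) ↑(g • τ) = denom g τ ^ m * wp m z τ := by
  refine (hasSum_wpTerm hm (div_denom_smul_mem_wpDomain g hz)).unique ?_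
  simp only [latticePt_smul, wpTerm_div (denom_ne_zero g τ)]
  exact ((rowActionEquiv g).hasSum_iff.mpr (hasSum_wpTerm hm hz)).mul_left _

variable (τ)

theorem hasDerivAt_denom : HasDerivAt (fun t : ℂ => denom g t) (g 1 0 : ℂ) τ := by
  simpa [denom] using
    ((hasDerivAt_id' (τ : ℂ)).const_mul (g 1 0 : ℂ)).add_const (g 1 1 : ℂ)

theorem hasDerivAt_smul :
    HasDerivAt (fun t : ℂ => ((g • ofComplex t : ℍ) : ℂ)) (1 / denom g τ ^ 2) τ := by
  have hdet : (g : GL (Fin 2) ℝ).val.det = 1 := Matrix.SpecialLinearGroup.det_coe _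
  have h := (UpperHalfPlane.hasStrictDerivAt_smul (hdet ▸ one_pos) τ).hasDerivAt
  rwa [hdet, ofReal_one] at h

variable {τ}

theorem deriv_wp_smul (hm : 1 ≤ m) (hz : (z, (τ : ℂ)) ∈ wpDomain) :
    deriv (fun s => wp m (z / denom g τ) s) ↑(g • τ) =
      denom g τ ^ (m + 2) * deriv (fun s => wp m z s) τ +
        m * g 1 0 * denom g τ ^ (m + 1) * (wp m z τ - z * wp (m + 1) z τ) := by
  have hj := denom_ne_zero g τ
  have hleft := hasDerivAt_wp_comp hm
    ((hasDerivAt_const (τ : ℂ) z).fun_div (hasDerivAt_denom g τ) hj) (hasDerivAt_smul g τ)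
    (by simpa using div_denom_smul_mem_wpDomain g hz)
  have hright := ((hasDerivAt_denom g τ).fun_pow m).fun_mul
    (hasDerivAt_wp_comp hm (hasDerivAt_const (τ : ℂ) z) (hasDerivAt_id' (τ : ℂ)) hz)
  have heq : (fun t : ℂ => wp m (z / denom g t) ↑(g • ofComplex t)) =ᶠ[𝓝 (τ : ℂ)]
      fun t => denom g t ^ m * wp m z t := by
    have hslice : ∀ᶠ t in 𝓝 (τ : ℂ), (z, t) ∈ wpDomain :=
      (Continuous.prodMk_right z).continuousAt.eventually (isOpen_wpDomain.eventually_mem hz)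
    filter_upwards [hslice] with t ht
    lift t to ℍ using ht.1
    rw [ofComplex_apply, wp_smul g hm ht]
  have key := (hleft.congr_of_eventuallyEq heq.symm).unique hright
  rw [ofComplex_apply, wp_smul g (Nat.le_add_left 1 m) hz] at key
  obtain ⟨n, rfl⟩ := Nat.exists_eq_add_of_le' hm
  rw [Nat.add_sub_cancel] at key
  field_simp at key
  linear_combination key

end ModularAction

section EisensteinSeries

variable (τ : ℍ)

/-- Subtracting the telescoping series `1 / (kτ + l) - 1 / (kτ + l + 1)`, whose sum over `l`
vanishes, makes the conditionally convergent double series of `G₂` absolutely convergent. -/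
theorem summable_inv_sq_sub_telescope :
    Summable fun p : ℤ × ℤ => 1 / ((p.1 : ℂ) * τ + p.2) ^ 2 -
      (1 / ((p.1 : ℂ) * τ + p.2) - 1 / ((p.1 : ℂ) * τ + p.2 + 1)) := by
  have H : Summable fun x : Fin 2 → ℤ =>
      (((x 0 : ℂ) * τ + x 1) ^ 2 * ((x 0 : ℂ) * τ + x 1 + 1))⁻¹ := by
    apply EisensteinSeries.summable_of_isBigO_rpow_norm (a := 3) (by norm_num)
    simpa [pow_three, pow_two, ← mul_assoc] using
      ((EisensteinSeries.isBigO_linear_add_const_vec τ 0 1).mul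
        (EisensteinSeries.isBigO_linear_add_const_vec τ 0 0)).mul
          (EisensteinSeries.isBigO_linear_add_const_vec τ 0 0)
  refine ((finTwoArrowEquiv ℤ).symm.summable_iff.mpr H).congr_cofinite ?_
  filter_upwards [eventually_cofinite_ne (0, 0), eventually_cofinite_ne (0, -1)] with p h0 h1
  have hp : (p.1 : ℂ) * τ + p.2 ≠ 0 := latticePt_ne_zero τ.im_pos h0
  have hp1 : (p.1 : ℂ) * τ + p.2 + 1 ≠ 0 := by
    have hne : (p.1, p.2 + 1) ≠ 0 := fun h => h1 <|
      Prod.ext (congrArg Prod.fst h :) (eq_neg_of_add_eq_zero_left (congrArg Prod.snd h :))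
    simpa [latticePt, add_assoc] using latticePt_ne_zero τ.im_pos hne
  simp only [Function.comp_apply, finTwoArrowEquiv_symm_apply, Matrix.cons_val_zero,
    Matrix.cons_val_one]
  field_simp
  ring

theorem e2Summand_eq_tsum (k : ℤ) :
    EisensteinSeries.e2Summand k τ = ∑' l : ℤ, 1 / ((k : ℂ) * τ + l) ^ 2 := by
  simp [EisensteinSeries.e2Summand, EisensteinSeries.eisSummand, zpow_ofNat]

theorem summable_e2Summand : Summable fun k => EisensteinSeries.e2Summand k τ := by
  have hd := summable_inv_sq_sub_telescope τ
  refine hd.prod.congr fun k => ?_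
  have htel := EisensteinSeries.tsum_symmetricIco_linear_sub_linear_add_one_eq_zero τ k
  have hs := EisensteinSeries.summable_right_one_div_linear_sub_one_div_linear_succ τ k
  rw [tsum_eq_of_summable_unconditional hs] at htel
  rw [← add_zero (∑' l, _), ← htel, e2Summand_eq_tsum, ← (hd.prod_factor k).tsum_add hs]
  exact tsum_congr fun l => sub_add_cancel _ _

theorem G2_eq_eisensteinSeries_G2 : G2 τ = EisensteinSeries.G2 τ := by
  have hs := summable_e2Summand τ
  rw [EisensteinSeries.G2, tsum_eq_of_summable_unconditional hs, tsum_eq_add_tsum_subtype_ne hs 0,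
    EisensteinSeries.e2Summand_zero_eq_two_riemannZeta_two, riemannZeta_two, G2]
  simp only [e2Summand_eq_tsum]
  ring

theorem G2_smul (g : SL(2, ℤ)) :
    G2 ↑(g • τ) = denom g τ ^ 2 * G2 τ - 2 * π * Complex.I * g 1 0 * denom g τ := by
  have hj := denom_ne_zero g τ
  have h := congrFun (EisensteinSeries.G2_slash_action g) τ
  rw [ModularForm.SL_slash_apply, Pi.sub_apply, ← G2_eq_eisensteinSeries_G2,
    ← G2_eq_eisensteinSeries_G2, zpow_neg, zpow_ofNat,
    mul_inv_eq_iff_eq_mul₀ (pow_ne_zero 2 hj)] at h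
  rw [h, EisensteinSeries.D2]
  field_simp

end EisensteinSeries

theorem psiTheta_modular_general (m : ℕ) (hm : 1 ≤ m) (g : SL(2, ℤ)) (τ : ℍ) (u v : ℂ)
    (huv : ∀ p : ℤ × ℤ, u - v ≠ latticePt τ p) :
    psiTheta m (u / denom g τ) (v / denom g τ) ↑(g • τ) =
      denom g τ ^ (m + 2) * psiTheta m u v τ := by
  have hz : (u - v, (τ : ℂ)) ∈ wpDomain := ⟨τ.im_pos, huv⟩
  have hz' : (v - u, (τ : ℂ)) ∈ wpDomain := neg_sub u v ▸ neg_mem_wpDomain hz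
  have hwp1 : wp1 ((v - u) / denom g τ) ↑(g • τ) = denom g τ * wp1 (v - u) τ := by
    simpa [wp] using wp_smul g le_rfl hz'
  have hj := denom_ne_zero g τ
  simp only [psiTheta, ← sub_div]
  rw [deriv_wp_smul g hm hz, G2_smul, wp_smul g hm hz, wp_smul g (Nat.le_add_left 1 m) hz, hwp1]
  field_simp
  ring

/-- Modular transformation of weight `m+2` of `ψ = ϑ_j(℘_m(z_j−z_s;·))` (case `j = r`):
for `g = (A B; C D) ∈ SL₂(ℤ)`,
`ψ(u/(Cτ+D), v/(Cτ+D); (Aτ+B)/(Cτ+D)) = (Cτ+D)^{m+2}·ψ(u,v;τ)`. -/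
theorem psiTheta_modular (m : ℕ) (hm : 2 ≤ m)
    (g : Matrix.SpecialLinearGroup (Fin 2) ℤ) (τ u v : ℂ) (hτ : 0 < τ.im)
    (huv : ∀ p : ℤ × ℤ, u - v ≠ latticePt τ p) :
    psiTheta m (u / ((g 1 0 : ℤ) * τ + (g 1 1 : ℤ)))
        (v / ((g 1 0 : ℤ) * τ + (g 1 1 : ℤ)))
        (((g 0 0 : ℤ) * τ + (g 0 1 : ℤ)) / ((g 1 0 : ℤ) * τ + (g 1 1 : ℤ))) =
      ((g 1 0 : ℤ) * τ + (g 1 1 : ℤ)) ^ (m + 2) * psiTheta m u v τ := by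
  have h := psiTheta_modular_general m (one_le_two.trans hm) g ⟨τ, hτ⟩ u v huv
  rwa [coe_smul_eq_div_denom, ModularGroup.denom_apply] at h
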